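/- arXiv:2410.21852 — 12 statements merged into one kernel-verified Lean document; each statement's English description precedes it below -/
import Mathlib

section
/- Let c be a nonzero real number and K_1, K_2 real numbers with K_1² + 1/c ≥ 0, and set A = √(K_1² + 1/c). Then the travelling wave u(X,T) = K_1 + A · tanh(A (X − c T + K_2)) satisfies the equation ∂_T u + ∂_X((1 + ∂_T u)/u) = 0 at every point (X,T) where u(X,T) ≠ 0. -/
/-- The tanh travelling wave
`u(X,T) = K₁ + A tanh (A (X - cT + K₂))`, with `A = √(K₁² + 1/c) ` and
`K₁² + 1/c ≥ 0`, satisfies `∂_T u + ∂_X((1 + ∂_T u)/u) = 0` wherever `u ≠ 0`. -/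
theorem travelling_wave_tanh_solves_E1
    (c K₁ K₂ : ℝ) (hc : c ≠ 0) (h : K₁ ^ 2 + 1 / c ≥ 0)
    (A : ℝ) (hA : A = Real.sqrt (K₁ ^ 2 + 1 / c))
    (u : ℝ → ℝ → ℝ)
    (hu : ∀ X T, u X T = K₁ + A * Real.tanh (A * (X - c * T + K₂))) :
    ∀ X T, u X T ≠ 0 →
      deriv (fun t => u X t) T
        + deriv (fun x => (1 + deriv (fun t => u x t) T) / u x T) X = 0 := by
  intro X T hne
  have htanh : ∀ y : ℝ, HasDerivAt Real.tanh (1 - Real.tanh y ^ 2) y := by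
    intro y
    have hcosh : Real.cosh y ≠ 0 := (Real.cosh_pos y).ne'
    have h1 := (Real.hasDerivAt_sinh y).div (Real.hasDerivAt_cosh y) hcosh
    have h2 : Real.tanh = Real.sinh / Real.cosh := by
      funext z
      simp [Real.tanh_eq_sinh_div_cosh]
    rw [h2]
    refine h1.congr_deriv ?_
    rw [Pi.div_apply]
    field_simp
  have hA2 : A ^ 2 = K₁ ^ 2 + 1 / c := by rw [hA, Real.sq_sqrt h]
  have hT : ∀ x t, HasDerivAt (fun t => u x t)
      (-c * (A ^ 2 * (1 - Real.tanh (A * (x - c * t + K₂)) ^ 2))) t := by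
    intro x t
    simp only [hu]
    have h1 : HasDerivAt (fun t : ℝ => A * (x - c * t + K₂)) (A * (-(c * 1))) t :=
      ((((hasDerivAt_id t).const_mul c).const_sub x).add_const K₂).const_mul A
    have h2 := (((htanh _).comp t h1).const_mul A).const_add K₁
    exact h2.congr_deriv (by ring)
  have hX : ∀ x t, HasDerivAt (fun x => u x t)
      (A ^ 2 * (1 - Real.tanh (A * (x - c * t + K₂)) ^ 2)) x := by
    intro x t
    simp only [hu]
    have h1 : HasDerivAt (fun x : ℝ => A * (x - c * t + K₂)) (A * 1) x :=
      (((hasDerivAt_id x).sub_const (c * t)).add_const K₂).const_mul A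
    have h2 := (((htanh _).comp x h1).const_mul A).const_add K₁
    exact h2.congr_deriv (by ring)
  have hev : (fun x => (1 + deriv (fun t => u x t) T) / u x T)
      =ᶠ[nhds X] (fun x => c * u x T - 2 * c * K₁) := by
    filter_upwards [(hX X T).continuousAt.eventually_ne hne] with x hx
    rw [(hT x T).deriv, div_eq_iff hx, hu x T]
    have hcA : c * A ^ 2 = c * K₁ ^ 2 + 1 := by
      rw [hA2]
      field_simp
    linear_combination (-1 : ℝ) * hcA
  rw [hev.deriv_eq, (hT X T).deriv, (((hX X T).const_mul c).sub_const (2 * c * K₁)).deriv]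
  ring
end

section
/- Let c be a nonzero real number and K_1, K_2 real numbers with K_1² + 1/c < 0, and set B = √(−(K_1² + 1/c)). Then the singular periodic travelling wave u(X,T) = K_1 − B · tan(B (X − c T + K_2)) satisfies the equation ∂_T u + ∂_X((1 + ∂_T u)/u) = 0 at every point (X,T) where cos(B (X − c T + K_2)) ≠ 0 and u(X,T) ≠ 0. -/
/-- The singular periodic travelling wave
`u(X,T) = K₁ - B tan (B (X - cT + K₂))`, with `B = √(-(K₁² + 1/c))` and
`K₁² + 1/c < 0`, satisfies `∂_T u + ∂_X((1 + ∂_T u)/u) = 0` at every point where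
`cos (B (X - cT + K₂)) ≠ 0` and `u ≠ 0`. -/
theorem travelling_wave_tan_solves_E1
    (c K₁ K₂ : ℝ) (hc : c ≠ 0) (h : K₁ ^ 2 + 1 / c < 0)
    (B : ℝ) (hB : B = Real.sqrt (-(K₁ ^ 2 + 1 / c)))
    (u : ℝ → ℝ → ℝ)
    (hu : ∀ X T, u X T = K₁ - B * Real.tan (B * (X - c * T + K₂))) :
    ∀ X T, Real.cos (B * (X - c * T + K₂)) ≠ 0 → u X T ≠ 0 →
      deriv (fun t => u X t) T
        + deriv (fun x => (1 + deriv (fun t => u x t) T) / u x T) X = 0 := by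
  intro X T hcos hne
  have hB2 : B ^ 2 = -(K₁ ^ 2 + 1 / c) := by
    rw [hB, Real.sq_sqrt (by linarith)]
  have hcB : c * B ^ 2 = -(c * K₁ ^ 2) - 1 := by
    rw [hB2]; field_simp; ring
  have htan : ∀ y : ℝ, Real.cos y ≠ 0 → 1 / Real.cos y ^ 2 = 1 + Real.tan y ^ 2 := by
    intro y hy
    rw [Real.tan_eq_sin_div_cos]
    field_simp
    linarith [Real.sin_sq_add_cos_sq y]
  have hT : ∀ x, Real.cos (B * (x - c * T + K₂)) ≠ 0 →
      deriv (fun t => u x t) T = c * u x T ^ 2 - 2 * c * K₁ * u x T - 1 := by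
    intro x hx
    have h1 : HasDerivAt (fun t : ℝ => B * (x - c * t + K₂)) (B * (-(c * 1))) T :=
      ((((hasDerivAt_id T).const_mul c).const_sub x).add_const K₂).const_mul B
    have h2 := (((Real.hasDerivAt_tan hx).comp T h1).const_mul B).const_sub K₁
    have h3 : (fun t => u x t) = fun t => K₁ - B * (Real.tan ∘ fun t : ℝ => B * (x - c * t + K₂)) t := by
      funext t; simp [hu]
    rw [h3, h2.deriv, htan _ hx, hu]
    linear_combination (1 : ℝ) * hcB
  have hX : HasDerivAt (fun x => u x T) (-(B * ((1 + Real.tan (B * (X - c * T + K₂)) ^ 2) * B))) X := by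
    have h1 : HasDerivAt (fun x : ℝ => B * (x - c * T + K₂)) (B * 1) X :=
      (((hasDerivAt_id X).sub_const (c * T)).add_const K₂).const_mul B
    have h2 := (((Real.hasDerivAt_tan hcos).comp X h1).const_mul B).const_sub K₁
    have h3 : (fun x => u x T) = fun x => K₁ - B * (Real.tan ∘ fun x : ℝ => B * (x - c * T + K₂)) x := by
      funext t; simp [hu]
    rw [htan _ hcos, mul_one] at h2
    rw [h3]
    exact h2
  have e1 : ∀ᶠ x in nhds X, u x T ≠ 0 := hX.continuousAt.eventually_ne hne
  have e2 : ∀ᶠ x in nhds X, Real.cos (B * (x - c * T + K₂)) ≠ 0 := by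
    have : ContinuousAt (fun x : ℝ => Real.cos (B * (x - c * T + K₂))) X := by fun_prop
    exact this.eventually_ne hcos
  have e3 : (fun x => (1 + deriv (fun t => u x t) T) / u x T) =ᶠ[nhds X]
      fun x => c * u x T - 2 * c * K₁ := by
    filter_upwards [e1, e2] with x hx1 hx2
    rw [hT x hx2]
    field_simp
    ring
  rw [e3.deriv_eq, ((hX.const_mul c).sub_const (2 * c * K₁)).deriv, hT X hcos, hu]
  linear_combination (-1 : ℝ) * hcB
end

section
/- Let K_1 be a nonzero real number and c, K_2 real numbers. Then the sigmoid travelling wave u(X,T) = (K_1/2) · (1 + tanh((K_1/2)(X − c T + K_2))) is nowhere zero and satisfies the equation ∂_T(u + (∂_X u)/u) = 0 at every point (X,T) ∈ ℝ². -/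
theorem hasDerivAt_tanh_aux (y : ℝ) : HasDerivAt Real.tanh (1 - Real.tanh y ^ 2) y := by
  have hc : Real.cosh y ≠ 0 := (Real.cosh_pos y).ne'
  have h := (Real.hasDerivAt_sinh y).div (Real.hasDerivAt_cosh y) hc
  have he : Real.tanh = Real.sinh / Real.cosh := by
    funext x
    exact Real.tanh_eq_sinh_div_cosh x
  have hv : 1 - Real.tanh y ^ 2 =
      (Real.cosh y * Real.cosh y - Real.sinh y * Real.sinh y) / Real.cosh y ^ 2 := by
    rw [Real.tanh_eq_sinh_div_cosh]
    field_simp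
  rw [hv, he]
  exact h

/-- The sigmoid travelling wave
`u(X,T) = (K₁/2)(1 + tanh((K₁/2)(X - cT + K₂)))` with `K₁ ≠ 0` is nowhere zero
and satisfies `∂_T (u + (∂_X u)/u) = 0` at every point of `ℝ²`. -/
theorem travelling_wave_sigmoid_solves_E2
    (K₁ c K₂ : ℝ) (hK₁ : K₁ ≠ 0)
    (u : ℝ → ℝ → ℝ)
    (hu : ∀ X T, u X T = K₁ / 2 * (1 + Real.tanh (K₁ / 2 * (X - c * T + K₂)))) :
    (∀ X T, u X T ≠ 0) ∧
      (∀ X T, deriv (fun t => u X t + deriv (fun x => u x t) X / u X t) T = 0) := by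
  have hne : ∀ X T, u X T ≠ 0 := by
    intro X T
    rw [hu]
    have := Real.neg_one_lt_tanh (K₁ / 2 * (X - c * T + K₂))
    exact mul_ne_zero (div_ne_zero hK₁ two_ne_zero) (by linarith)
  refine ⟨hne, fun X T => ?_⟩
  have key : ∀ t, u X t + deriv (fun x => u x t) X / u X t = K₁ := by
    intro t
    have hl : HasDerivAt (fun x : ℝ => K₁ / 2 * (x - c * t + K₂)) (K₁ / 2 * 1) X :=
      (((hasDerivAt_id X).sub_const (c * t)).add_const K₂).const_mul (K₁ / 2)
    have hd := (((hasDerivAt_tanh_aux (K₁ / 2 * (X - c * t + K₂))).comp X hl).const_add 1).const_mul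
      (K₁ / 2)
    have hf : (fun x => u x t) =
        fun x => K₁ / 2 * (1 + (Real.tanh ∘ fun x : ℝ => K₁ / 2 * (x - c * t + K₂)) x) := by
      funext x
      exact hu x t
    have hd2 := hd.deriv
    rw [← hf] at hd2
    rw [hd2]
    have hn := hne X t
    rw [hu] at hn ⊢
    generalize Real.tanh (K₁ / 2 * (X - c * t + K₂)) = w at hn ⊢
    rw [← eq_sub_iff_add_eq', div_eq_iff hn]
    ring
  simp only [key, deriv_const]
end

section
/- Let φ : ℝ² → ℝ be a smooth function of (X,T) satisfying the linear equation ∂_X ∂_T φ + φ = 0 at every point of ℝ². Then at every point (X,T) where φ(X,T) ≠ 0 and ∂_X φ(X,T) ≠ 0, the Cole–Hopf transform u = (∂_X φ)/φ satisfies ∂_T u + ∂_X((1 + ∂_T u)/u) = 0. -/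
/-- If `φ` is smooth and satisfies the linear equation
`∂_X ∂_T φ + φ = 0` everywhere, then its Cole–Hopf transform
`u = (∂_X φ)/φ` satisfies `∂_T u + ∂_X((1 + ∂_T u)/u) = 0` at every point where
`φ ≠ 0` and `∂_X φ ≠ 0`. -/
theorem coleHopf_solves_E1
    (φ : ℝ → ℝ → ℝ)
    (hφ : ContDiff ℝ (⊤ : ℕ∞) (fun p : ℝ × ℝ => φ p.1 p.2))
    (hlin : ∀ X T, deriv (fun x => deriv (fun t => φ x t) T) X + φ X T = 0)
    (u : ℝ → ℝ → ℝ)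
    (hu : ∀ X T, u X T = deriv (fun x => φ x T) X / φ X T) :
    ∀ X T, φ X T ≠ 0 → deriv (fun x => φ x T) X ≠ 0 →
      deriv (fun t => u X t) T
        + deriv (fun x => (1 + deriv (fun t => u x t) T) / u x T) X = 0 := by
  set F : ℝ × ℝ → ℝ := fun p => φ p.1 p.2 with hF
  have hFd : Differentiable ℝ F := hφ.differentiable (by simp)
  have h2 : (2 : WithTop ℕ∞) ≤ ((⊤ : ℕ∞) : WithTop ℕ∞) := by
    have : ((2 : ℕ∞) : WithTop ℕ∞) ≤ ((⊤ : ℕ∞) : WithTop ℕ∞) := WithTop.coe_le_coe.2 le_top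
    exact this
  have hG : ContDiff ℝ 1 (fderiv ℝ F) := (hφ.of_le h2).fderiv_right (m := 1) (n := 2) (by norm_num)
  have hGd : Differentiable ℝ (fderiv ℝ F) := hG.differentiable (by simp)
  have cx : ∀ X T : ℝ, HasDerivAt (fun x : ℝ => (x, T)) ((1 : ℝ), (0 : ℝ)) X := fun X T =>
    (hasDerivAt_id X).prodMk (hasDerivAt_const X T)
  have ct : ∀ X T : ℝ, HasDerivAt (fun t : ℝ => (X, t)) ((0 : ℝ), (1 : ℝ)) T := fun X T =>
    (hasDerivAt_const T X).prodMk (hasDerivAt_id T)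
  have hx : ∀ X T, HasDerivAt (fun x => φ x T) (fderiv ℝ F (X, T) (1, 0)) X := fun X T =>
    HasFDerivAt.comp_hasDerivAt (l := F) X (hFd (X, T)).hasFDerivAt (cx X T)
  have ht : ∀ X T, HasDerivAt (fun t => φ X t) (fderiv ℝ F (X, T) (0, 1)) T := fun X T =>
    HasFDerivAt.comp_hasDerivAt (l := F) T (hFd (X, T)).hasFDerivAt (ct X T)
  have hGx : ∀ X T, HasDerivAt (fun x => fderiv ℝ F (x, T) (0, 1))
      (fderiv ℝ (fderiv ℝ F) (X, T) (1, 0) (0, 1)) X := fun X T => by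
    have h := (hGd (X, T)).hasFDerivAt.comp_hasDerivAt X (cx X T)
    simpa using h.clm_apply (hasDerivAt_const X ((0 : ℝ), (1 : ℝ)))
  have hGx1 : ∀ X T, HasDerivAt (fun x => fderiv ℝ F (x, T) (1, 0))
      (fderiv ℝ (fderiv ℝ F) (X, T) (1, 0) (1, 0)) X := fun X T => by
    have h := (hGd (X, T)).hasFDerivAt.comp_hasDerivAt X (cx X T)
    simpa using h.clm_apply (hasDerivAt_const X ((1 : ℝ), (0 : ℝ)))
  have hGt : ∀ X T, HasDerivAt (fun t => fderiv ℝ F (X, t) (1, 0))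
      (fderiv ℝ (fderiv ℝ F) (X, T) (0, 1) (1, 0)) T := fun X T => by
    have h := (hGd (X, T)).hasFDerivAt.comp_hasDerivAt T (ct X T)
    simpa using h.clm_apply (hasDerivAt_const T ((1 : ℝ), (0 : ℝ)))
  have hsym : ∀ X T, fderiv ℝ (fderiv ℝ F) (X, T) (0, 1) (1, 0)
      = fderiv ℝ (fderiv ℝ F) (X, T) (1, 0) (0, 1) := fun X T =>
    (hφ.contDiffAt (x := (X, T))).isSymmSndFDerivAt (by simpa using h2) (0, 1) (1, 0)
  have hl : ∀ X T, fderiv ℝ (fderiv ℝ F) (X, T) (1, 0) (0, 1) = - φ X T := fun X T => by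
    have h := hlin X T
    simp only [fun x => (ht x T).deriv, (hGx X T).deriv] at h
    linarith
  have hu1 : ∀ X T, u X T = fderiv ℝ F (X, T) (1, 0) / φ X T := fun X T => by
    rw [hu, (hx X T).deriv]
  have hut : ∀ X T, φ X T ≠ 0 → deriv (fun t => u X t) T
      = -1 - fderiv ℝ F (X, T) (1, 0) * fderiv ℝ F (X, T) (0, 1) / φ X T ^ 2 := fun X T h0 => by
    simp only [hu1]
    rw [((hGt X T).fun_div (ht X T) h0).deriv, hsym, hl]
    field_simp
  intro X T h0 h1
  rw [(hx X T).deriv] at h1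
  have e : (fun x => (1 + deriv (fun t => u x t) T) / u x T) =ᶠ[nhds X]
      fun x => - (fderiv ℝ F (x, T) (0, 1) / φ x T) := by
    filter_upwards [(hx X T).continuousAt.eventually_ne h0,
      (hGx1 X T).continuousAt.eventually_ne h1] with x a b
    rw [hut x T a, hu1]
    field_simp
    ring
  rw [e.deriv_eq, hut X T h0, ((hGx X T).fun_div (hx X T) h0).fun_neg.deriv, hl]
  field_simp
  ring
end

section
/- Let A : ℝ → ℝ be continuously differentiable and B : ℝ → ℝ twice continuously differentiable, and suppose A(T) + B(X) ≠ 0 and B′(X) ≠ 0 for all (X,T) ∈ ℝ². Then the function u(X,T) = ∂_X log(A(T) + B(X)) = B′(X)/(A(T) + B(X)) satisfies ∂_T(u + (∂_X u)/u) = 0 at every point of ℝ². -/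
/-- For `A` of class `C¹` and `B` of class `C²` with
`A(T) + B(X) ≠ 0` and `B'(X) ≠ 0` everywhere, the function
`u(X,T) = ∂_X log(A(T) + B(X)) = B'(X)/(A(T) + B(X))` satisfies
`∂_T (u + (∂_X u)/u) = 0` at every point of `ℝ²`. -/
theorem general_solution_degenerate_case_solves_E2
    (A B : ℝ → ℝ) (hA : ContDiff ℝ 1 A) (hB : ContDiff ℝ 2 B)
    (hne : ∀ X T : ℝ, A T + B X ≠ 0) (hB' : ∀ X : ℝ, deriv B X ≠ 0)
    (u : ℝ → ℝ → ℝ)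
    (hu : ∀ X T, u X T = deriv B X / (A T + B X)) :
    ∀ X T, deriv (fun t => u X t + deriv (fun x => u x t) X / u X t) T = 0 := by
  intro X T
  have hBd : Differentiable ℝ B := hB.differentiable (by norm_num)
  have hB2 : ContDiff ℝ 1 (deriv B) := by
    have h : ContDiff ℝ (1 + 1) B := by
      rw [one_add_one_eq_two]
      exact hB
    exact (contDiff_succ_iff_deriv.1 h).2.2
  have hBdd : Differentiable ℝ (deriv B) := hB2.differentiable (by norm_num)
  have key : (fun t => u X t + deriv (fun x => u x t) X / u X t)
      = fun _ => deriv (deriv B) X / deriv B X := by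
    funext t
    have h1 : HasDerivAt (fun x => u x t)
        ((deriv (deriv B) X * (A t + B X) - deriv B X * deriv B X) / (A t + B X) ^ 2) X := by
      have e : (fun x => u x t) = fun x => deriv B x / (A t + B x) := by
        funext x
        exact hu x t
      rw [e]
      exact (hBdd X).hasDerivAt.div ((hBd X).hasDerivAt.const_add (A t)) (hne X t)
    rw [h1.deriv, hu]
    have h2 := hne X t
    have h3 := hB' X
    field_simp
    ring
  rw [key]
  exact deriv_const _ _
end

section
/- Let η > 0, let N ≥ 1, let k_1, …, k_N be nonzero real numbers and δ_1, …, δ_N real numbers, and set θ_j(X,T) = k_j X − T/k_j + δ_j. Then the multi-kink function u(X,T) = (Σ_{j=1}^N k_j e^{θ_j(X,T)/η}) / (Σ_{j=1}^N e^{θ_j(X,T)/η}) satisfies the viscous conservation law ∂_T u + ∂_X((1 + η ∂_T u)/u) = 0 at every point (X,T) where u(X,T) ≠ 0. -/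
/-- The multi-kink function
`u = (Σ k_j e^{θ_j/η})/(Σ e^{θ_j/η})`, with `θ_j(X,T) = k_j X - T/k_j + δ_j` and
`k_j ≠ 0`, satisfies the viscous conservation law
`∂_T u + ∂_X((1 + η ∂_T u)/u) = 0` wherever `u ≠ 0`. -/
theorem multikink_solves_viscous_E1
    (η : ℝ) (hη : 0 < η) (N : ℕ) (hN : 1 ≤ N)
    (k δ : Fin N → ℝ) (hk : ∀ j, k j ≠ 0)
    (θ : Fin N → ℝ → ℝ → ℝ)
    (hθ : ∀ j X T, θ j X T = k j * X - T / k j + δ j)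
    (u : ℝ → ℝ → ℝ)
    (hu : ∀ X T, u X T =
      (∑ j, k j * Real.exp (θ j X T / η)) / (∑ j, Real.exp (θ j X T / η))) :
    ∀ X T, u X T ≠ 0 →
      deriv (fun t => u X t) T
        + deriv (fun x => (1 + η * deriv (fun t => u x t) T) / u x T) X = 0 := by
  have hη0 : η ≠ 0 := hη.ne'
  have hθ' : θ = fun j X T => k j * X - T / k j + δ j := by
    funext j X T
    exact hθ j X T
  subst hθ'
  obtain ⟨E, hE⟩ : ∃ E : Fin N → ℝ → ℝ → ℝ,
      E = fun j X T => Real.exp ((k j * X - T / k j + δ j) / η) := ⟨_, rfl⟩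
  have hu' : ∀ X T, u X T = (∑ j, k j * E j X T) / (∑ j, E j X T) := by
    intro X T
    rw [hu, hE]
  have dX : ∀ j X T, HasDerivAt (fun x => E j x T) (k j / η * E j X T) X := by
    intro j X T
    rw [hE]
    have h := (((((hasDerivAt_id X).const_mul (k j)).sub_const (T / k j)).add_const
      (δ j)).div_const η).exp
    refine h.congr_deriv ?_
    simp only [id]
    ring
  have dT : ∀ j X T, HasDerivAt (fun t => E j X t) (-(1 / k j) / η * E j X T) T := by
    intro j X T
    rw [hE]
    have h := (((((hasDerivAt_id T).div_const (k j)).const_sub (k j * X)).add_const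
      (δ j)).div_const η).exp
    refine h.congr_deriv ?_
    simp only [id]
    ring
  have hpos : ∀ X T, 0 < ∑ j, E j X T := by
    intro X T
    rw [hE]
    exact Finset.sum_pos (fun j _ => Real.exp_pos _) ⟨⟨0, hN⟩, Finset.mem_univ _⟩
  have d0X : ∀ X T, HasDerivAt (fun x => ∑ j, E j x T) ((∑ j, k j * E j X T) / η) X := by
    intro X T
    refine (HasDerivAt.fun_sum (fun j _ => dX j X T)).congr_deriv ?_
    rw [Finset.sum_div]
    exact Finset.sum_congr rfl (fun j _ => by ring)
  have d1X : ∀ X T, DifferentiableAt ℝ (fun x => ∑ j, k j * E j x T) X := by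
    intro X T
    exact (HasDerivAt.fun_sum (fun j _ => (dX j X T).const_mul (k j))).differentiableAt
  have dmX : ∀ X T, HasDerivAt (fun x => ∑ j, 1 / k j * E j x T) ((∑ j, E j X T) / η) X := by
    intro X T
    refine (HasDerivAt.fun_sum (fun j _ => (dX j X T).const_mul (1 / k j))).congr_deriv ?_
    rw [Finset.sum_div]
    refine Finset.sum_congr rfl (fun j _ => ?_)
    have := hk j
    field_simp
  have d0T : ∀ X T, HasDerivAt (fun t => ∑ j, E j X t) (-(∑ j, 1 / k j * E j X T) / η) T := by
    intro X T
    refine (HasDerivAt.fun_sum (fun j _ => dT j X T)).congr_deriv ?_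
    rw [← Finset.sum_neg_distrib, Finset.sum_div]
    exact Finset.sum_congr rfl (fun j _ => by ring)
  have d1T : ∀ X T, HasDerivAt (fun t => ∑ j, k j * E j X t) (-(∑ j, E j X T) / η) T := by
    intro X T
    refine (HasDerivAt.fun_sum (fun j _ => (dT j X T).const_mul (k j))).congr_deriv ?_
    rw [← Finset.sum_neg_distrib, Finset.sum_div]
    refine Finset.sum_congr rfl (fun j _ => ?_)
    have := hk j
    field_simp
  have duT : ∀ X T, deriv (fun t => u X t) T =
      ((∑ j, k j * E j X T) * (∑ j, 1 / k j * E j X T) / (∑ j, E j X T) ^ 2 - 1) / η := by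
    intro X T
    have h0 := (hpos X T).ne'
    have h := ((d1T X T).fun_div (d0T X T) h0).deriv
    simp only [hu']
    rw [h]
    field_simp
    ring
  intro X T hne
  have hc : ContinuousAt (fun x => u x T) X := by
    simp only [hu']
    exact (d1X X T).continuousAt.div (d0X X T).continuousAt (hpos X T).ne'
  have hev : (fun x => (1 + η * deriv (fun t => u x t) T) / u x T) =ᶠ[nhds X]
      fun x => (∑ j, 1 / k j * E j x T) / (∑ j, E j x T) := by
    filter_upwards [hc.eventually_ne hne] with x hx
    rw [duT]
    rw [hu'] at hx ⊢
    have h0 := (hpos x T).ne'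
    have h1 : (∑ j, k j * E j x T) ≠ 0 := fun h => hx (by rw [h, zero_div])
    generalize (∑ j, 1 / k j * E j x T) = c at *
    generalize (∑ j, k j * E j x T) = b at *
    generalize (∑ j, E j x T) = a at *
    field_simp
    ring
  have h0 := (hpos X T).ne'
  rw [hev.deriv_eq, duT, ((dmX X T).fun_div (d0X X T) h0).deriv]
  generalize (∑ j, 1 / k j * E j X T) = c at *
  generalize (∑ j, k j * E j X T) = b at *
  generalize (∑ j, E j X T) = a at *
  field_simp
  ring
end

section
/- Let η > 0, let N ≥ 1, let k_0 = 0 and ω_0 = 0, let k_1, …, k_N be nonzero real numbers, let ω_j = ω⁰ for j = 1,…,N where ω⁰ is a fixed real number, and let δ_0, …, δ_N be real numbers; set θ_j(X,T) = k_j X − ω_j T + δ_j. Then the function u(X,T) = η ∂_X log(Σ_{j=0}^N e^{θ_j(X,T)/η}) satisfies ∂_T(u + (η/u) ∂_X u) = 0 at every point (X,T) where u(X,T) ≠ 0. -/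
theorem expSum_hasDerivAt {N : ℕ} (w a b : Fin N → ℝ) (x : ℝ) :
    HasDerivAt (fun x => ∑ i, w i * Real.exp (a i * x + b i))
      (∑ i, (w i * a i) * Real.exp (a i * x + b i)) x := by
  apply HasDerivAt.fun_sum
  intro i _
  have h : HasDerivAt (fun x => a i * x + b i) (a i) x := by
    simpa using ((hasDerivAt_id x).const_mul (a i)).add_const (b i)
  have e : (w i * a i) * Real.exp (a i * x + b i) = w i * (Real.exp (a i * x + b i) * a i) := by
    ring
  rw [e]
  exact (h.exp).const_mul (w i)

/-- In the degenerate case `Δ = 0`, the multi-kink function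
`u = η ∂_X log(Σ_{j=0}^N e^{θ_j/η})`, with `θ_j(X,T) = k_j X - ω_j T + δ_j`,
`k 0 = 0`, `ω 0 = 0`, `k j ≠ 0` and `ω j = ω⁰` for `j ≠ 0`, satisfies
`∂_T (u + (η/u) ∂_X u) = 0` wherever `u ≠ 0`. -/
theorem multikink_degenerate_solves_viscous_E2
    (η : ℝ) (hη : 0 < η) (N : ℕ) (hN : 1 ≤ N)
    (k δ ω : Fin (N + 1) → ℝ) (ω₀ : ℝ)
    (hk0 : k 0 = 0) (hω0 : ω 0 = 0)
    (hkne : ∀ j, j ≠ 0 → k j ≠ 0) (hωj : ∀ j, j ≠ 0 → ω j = ω₀)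
    (θ : Fin (N + 1) → ℝ → ℝ → ℝ)
    (hθ : ∀ j X T, θ j X T = k j * X - ω j * T + δ j)
    (u : ℝ → ℝ → ℝ)
    (hu : ∀ X T, u X T =
      η * deriv (fun x => Real.log (∑ j, Real.exp (θ j x T / η))) X) :
    ∀ X T, u X T ≠ 0 →
      deriv (fun t => u X t + η / u X t * deriv (fun x => u x t) X) T = 0 := by
  obtain ⟨G, G1, G2, hG, hG1, hpos, hS⟩ : ∃ G G1 G2 : ℝ → ℝ, (∀ x, HasDerivAt G (G1 x) x) ∧
      (∀ x, HasDerivAt G1 (G2 x) x) ∧ (∀ x, 0 ≤ G x) ∧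
      ∀ x t, ∑ j, Real.exp (θ j x t / η) =
        Real.exp (δ 0 / η) + Real.exp (-ω₀ * t / η) * G x := by
    refine ⟨_, _, _, expSum_hasDerivAt (fun _ : Fin N => 1) (fun i => k i.succ / η)
      (fun i => δ i.succ / η), expSum_hasDerivAt _ _ _, ?_, ?_⟩
    · intro x
      positivity
    · intro x t
      rw [Fin.sum_univ_succ, Finset.mul_sum]
      congr 1
      · rw [hθ, hk0, hω0]; simp
      · refine Finset.sum_congr rfl fun i _ => ?_
        rw [hθ, hωj _ (Fin.succ_ne_zero i), one_mul, ← Real.exp_add]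
        congr 1
        ring
  have hF : ∀ x t, 0 < Real.exp (δ 0 / η) + Real.exp (-ω₀ * t / η) * G x := fun x t => by
    have := hpos x
    positivity
  have hFd : ∀ x t, HasDerivAt (fun x => Real.exp (δ 0 / η) + Real.exp (-ω₀ * t / η) * G x)
      (Real.exp (-ω₀ * t / η) * G1 x) x := fun x t => ((hG x).const_mul _).const_add _
  have hu' : ∀ x t, u x t = η * (Real.exp (-ω₀ * t / η) * G1 x /
      (Real.exp (δ 0 / η) + Real.exp (-ω₀ * t / η) * G x)) := by
    intro x t
    rw [hu]
    simp only [hS]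
    rw [((hFd x t).log (hF x t).ne').deriv]
  intro X T hne
  have hG1ne : G1 X ≠ 0 := by
    intro h
    apply hne
    rw [hu', h]
    simp
  have hconst : (fun t => u X t + η / u X t * deriv (fun x => u x t) X) =
      fun _ => η * (G2 X / G1 X) := by
    funext t
    have hd := ((((hG1 X).const_mul (Real.exp (-ω₀ * t / η))).fun_div (hFd X t)
      (hF X t).ne').const_mul η).deriv
    simp only [hu']
    rw [hd]
    have h1 := (hF X t).ne'
    have h2 := (Real.exp_pos (-ω₀ * t / η)).ne'
    generalize Real.exp (-ω₀ * t / η) = c at *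
    generalize Real.exp (δ 0 / η) = A at *
    have h3 := hη.ne'
    field_simp
    ring
  rw [hconst]
  simp
end

section
/- Let η > 0, let k_1, …, k_N be pairwise distinct nonzero real numbers, all of the same sign or more generally with k_+ k_− ≠ 0 where k_+ = max_j k_j and k_− = min_j k_j, let δ_1, …, δ_N be real, set θ_j(X,T) = k_j X − T/k_j + δ_j, and let u(X,T) = (Σ_j k_j e^{θ_j/η}) / (Σ_j e^{θ_j/η}). Then for every fixed T the momentum density X ↦ −∂_T u(X,T) is integrable over ℝ, and the total momentum P(T) = −∫_{−∞}^{∞} ∂_T u(X,T) dX equals (k_− − k_+)/(k_− k_+); in particular P(T) is independent of T. -/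
lemma mk_hasDeriv {N : ℕ} (hN : 1 ≤ N) (c r : Fin N → ℝ) (f : Fin N → ℝ → ℝ) (x : ℝ)
    (hf : ∀ j, HasDerivAt (f j) (r j) x) :
    HasDerivAt (fun y => (∑ j, c j * Real.exp (f j y)) / (∑ j, Real.exp (f j y)))
      (((∑ j, c j * (Real.exp (f j x) * r j)) * (∑ j, Real.exp (f j x))
        - (∑ j, c j * Real.exp (f j x)) * (∑ j, Real.exp (f j x) * r j))
        / (∑ j, Real.exp (f j x)) ^ 2) x := by
  have : Nonempty (Fin N) := ⟨⟨0, hN⟩⟩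
  have hS : (∑ j, Real.exp (f j x)) ≠ 0 :=
    (Finset.sum_pos (fun j _ => Real.exp_pos _) Finset.univ_nonempty).ne'
  exact HasDerivAt.fun_div (HasDerivAt.fun_sum fun j _ => ((hf j).exp.const_mul (c j)))
    (HasDerivAt.fun_sum fun j _ => (hf j).exp) hS

lemma mk_limit {N : ℕ} (c : Fin N → ℝ) (f : Fin N → ℝ → ℝ) (m : Fin N) (l : Filter ℝ)
    (hf : ∀ j, j ≠ m → Filter.Tendsto (fun y => f j y - f m y) l Filter.atBot) :
    Filter.Tendsto (fun y => (∑ j, c j * Real.exp (f j y)) / (∑ j, Real.exp (f j y)))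
      l (nhds (c m)) := by
  have h1 : ∀ j, Filter.Tendsto (fun y => Real.exp (f j y - f m y)) l
      (nhds (if j = m then 1 else 0)) := by
    intro j
    split_ifs with h
    · subst h; simpa using tendsto_const_nhds
    · exact Real.tendsto_exp_atBot.comp (hf j h)
  have h2 := (tendsto_finsetSum Finset.univ fun j _ => (h1 j).const_mul (c j)).div
    (tendsto_finsetSum Finset.univ fun j _ => h1 j) (by simp)
  simp only [mul_ite, mul_one, mul_zero, Finset.sum_ite_eq', Finset.mem_univ, if_true,
    div_one] at h2
  refine h2.congr fun y => ?_
  simp only [Real.exp_sub, Pi.div_apply, ← mul_div_assoc, ← Finset.sum_div]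
  rw [div_div_div_cancel_right₀ (Real.exp_pos _).ne']

lemma mk_int_abs : MeasureTheory.Integrable (fun x : ℝ => Real.exp (-|x|)) := by
  rw [← MeasureTheory.integrableOn_univ, ← Set.Iic_union_Ioi (a := (0:ℝ))]
  refine MeasureTheory.IntegrableOn.union ?_ ?_
  · refine (integrableOn_exp_Iic 0).congr_fun (fun x hx => ?_) measurableSet_Iic
    simp only [Set.mem_Iic] at hx
    simp [abs_of_nonpos hx]
  · refine (integrableOn_exp_neg_Ioi 0).congr_fun (fun x hx => ?_) measurableSet_Ioi
    simp only [Set.mem_Ioi] at hx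
    simp [abs_of_pos hx]

lemma mk_int_term {N : ℕ} (f : Fin N → ℝ → ℝ) (hc : ∀ j, Continuous (f j)) (i j : Fin N)
    (a b : ℝ) (ha : a ≠ 0) (hij : ∀ x, f i x - f j x = a * x + b) :
    MeasureTheory.Integrable (fun x => Real.exp (f i x) * Real.exp (f j x)
      / (∑ l, Real.exp (f l x)) ^ 2) := by
  have hpos : ∀ x, 0 < ∑ l, Real.exp (f l x) := fun x =>
    Finset.sum_pos (fun j _ => Real.exp_pos _) ⟨i, Finset.mem_univ _⟩
  have hle : ∀ x l, Real.exp (f l x) ≤ ∑ l, Real.exp (f l x) := fun x l =>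
    Finset.single_le_sum (f := fun l => Real.exp (f l x))
      (fun _ _ => (Real.exp_pos _).le) (Finset.mem_univ l)
  have h0 : MeasureTheory.Integrable (fun x : ℝ => Real.exp (-|a * x + b|)) :=
    (mk_int_abs.comp_add_right b).comp_mul_left' ha
  refine h0.mono' ?_ (Filter.Eventually.of_forall fun x => ?_)
  · refine Continuous.aestronglyMeasurable ?_
    refine Continuous.div (by fun_prop) (by fun_prop) fun x => (pow_pos (hpos x) 2).ne'
  · rw [Real.norm_of_nonneg (div_nonneg (by positivity) (by positivity)), ← hij x]
    rw [div_le_iff₀ (pow_pos (hpos x) 2)]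
    have hi := hle x i
    have hj := hle x j
    rcases le_total 0 (f i x - f j x) with h | h
    · rw [abs_of_nonneg h]
      calc Real.exp (f i x) * Real.exp (f j x)
          = Real.exp (-(f i x - f j x)) * Real.exp (f i x) ^ 2 := by
            rw [sq, ← Real.exp_add, ← Real.exp_add, ← Real.exp_add]; congr 1; ring
        _ ≤ _ := by gcongr
    · rw [abs_of_nonpos h]
      calc Real.exp (f i x) * Real.exp (f j x)
          = Real.exp (- -(f i x - f j x)) * Real.exp (f j x) ^ 2 := by
            rw [sq, ← Real.exp_add, ← Real.exp_add, ← Real.exp_add]; congr 1; ring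
        _ ≤ _ := by gcongr

/-- For every fixed `T`, the momentum density `-∂_T u(·,T)` of the
multi-kink solution is integrable over `ℝ` and the total momentum
`P(T) = -∫ ∂_T u dX` equals `(k₋ - k₊)/(k₋ k₊)`; in particular it does not
depend on `T`. -/
theorem multikink_total_momentum
    (η : ℝ) (hη : 0 < η) (N : ℕ) (hN : 1 ≤ N)
    (k δ : Fin N → ℝ) (hk : ∀ j, k j ≠ 0) (hinj : Function.Injective k)
    (θ : Fin N → ℝ → ℝ → ℝ)
    (hθ : ∀ j X T, θ j X T = k j * X - T / k j + δ j)
    (u : ℝ → ℝ → ℝ)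
    (hu : ∀ X T, u X T =
      (∑ j, k j * Real.exp (θ j X T / η)) / (∑ j, Real.exp (θ j X T / η)))
    (iMax iMin : Fin N) (hmax : ∀ j, k j ≤ k iMax) (hmin : ∀ j, k iMin ≤ k j)
    (hprod : k iMax * k iMin ≠ 0) :
    ∀ T : ℝ,
      MeasureTheory.Integrable (fun X => deriv (fun t => u X t) T) ∧
      ∫ X : ℝ, -deriv (fun t => u X t) T
        = (k iMin - k iMax) / (k iMin * k iMax) := by
  intro T
  have hdT : ∀ X j, HasDerivAt (fun t => θ j X t / η) (-(1 / k j) / η) T := by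
    intro X j
    simp only [hθ]
    exact ((((hasDerivAt_id T).div_const (k j)).const_sub (k j * X)).add_const (δ j)).div_const η
  have hdX : ∀ X j, HasDerivAt (fun x => θ j x T / η) (k j / η) X := by
    intro X j
    simp only [hθ]
    simpa using
      ((((hasDerivAt_id X).const_mul (k j)).sub_const (T / k j)).add_const (δ j)).div_const η
  have hdiff : ∀ i j x, θ i x T / η - θ j x T / η
      = (k i - k j) / η * x + ((-T / k i + δ i) - (-T / k j + δ j)) / η := by
    intro i j x
    simp only [hθ]; ring
  have hcont : ∀ j, Continuous (fun x => θ j x T / η) := fun j =>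
    continuous_iff_continuousAt.2 fun x => (hdX x j).continuousAt
  have hform : ∀ X, deriv (fun t => u X t) T = ∑ i, ∑ j, ((k i / k j - 1) * (1 / η)) *
      (Real.exp (θ i X T / η) * Real.exp (θ j X T / η)
        / (∑ l, Real.exp (θ l X T / η)) ^ 2) := by
    intro X
    simp only [hu]
    rw [(mk_hasDeriv hN k _ (fun j t => θ j X t / η) T (hdT X)).deriv]
    rw [Finset.sum_mul_sum, Finset.sum_mul_sum, ← Finset.sum_sub_distrib, Finset.sum_div]
    refine Finset.sum_congr rfl fun i _ => ?_
    rw [← Finset.sum_sub_distrib, Finset.sum_div]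
    refine Finset.sum_congr rfl fun j _ => ?_
    have h1 := hk i
    have h2 := hk j
    generalize (∑ l, Real.exp (θ l X T / η)) = S
    generalize Real.exp (θ i X T / η) = p
    generalize Real.exp (θ j X T / η) = q
    have h3 : k i * (p * (-(1 / k i) / η)) = - p / η := by field_simp
    rw [h3]
    ring
  have hI : MeasureTheory.Integrable (fun X => deriv (fun t => u X t) T) := by
    simp only [hform]
    refine MeasureTheory.integrable_finsetSum _ fun i _ =>
      MeasureTheory.integrable_finsetSum _ fun j _ => ?_
    by_cases hij : i = j
    · subst hij
      simp [div_self (hk i)]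
    · refine MeasureTheory.Integrable.const_mul ?_ _
      exact mk_int_term (fun j x => θ j x T / η) hcont i j _ _
        (div_ne_zero (sub_ne_zero.2 fun h => hij (hinj h)) hη.ne') (hdiff i j)
  refine ⟨hI, ?_⟩
  have hV : ∀ X, HasDerivAt (fun x => (∑ j, (-1 / k j) * Real.exp (θ j x T / η))
      / (∑ j, Real.exp (θ j x T / η))) (deriv (fun t => u X t) T) X := by
    intro X
    convert mk_hasDeriv hN (fun j => -1 / k j) _ (fun j x => θ j x T / η) X (hdX X) using 1
    simp only [hu]
    rw [(mk_hasDeriv hN k _ (fun j t => θ j X t / η) T (hdT X)).deriv]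
    congr 1
    have e1 : ∀ j, k j * (Real.exp (θ j X T / η) * (-(1 / k j) / η))
        = -1 / k j * (Real.exp (θ j X T / η) * (k j / η)) := by
      intro j; ring
    have e2 : (∑ j, Real.exp (θ j X T / η) * (-(1 / k j) / η))
        = (∑ j, -1 / k j * Real.exp (θ j X T / η)) / η := by
      rw [Finset.sum_div]; exact Finset.sum_congr rfl fun j _ => by ring
    have e3 : (∑ j, Real.exp (θ j X T / η) * (k j / η))
        = (∑ j, k j * Real.exp (θ j X T / η)) / η := by
      rw [Finset.sum_div]; exact Finset.sum_congr rfl fun j _ => by ring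
    simp only [e1]
    rw [e2, e3]; ring
  have hT := mk_limit (fun j => -1 / k j) (fun j x => θ j x T / η) iMax Filter.atTop (by
    intro j hj
    simp only [hdiff]
    refine Filter.tendsto_atBot_add_const_right _ _ ?_
    refine Filter.tendsto_id.const_mul_atTop_of_neg ?_
    exact div_neg_of_neg_of_pos
      (sub_neg.2 (lt_of_le_of_ne (hmax j) fun h => hj (hinj h))) hη)
  have hB := mk_limit (fun j => -1 / k j) (fun j x => θ j x T / η) iMin Filter.atBot (by
    intro j hj
    simp only [hdiff]
    refine Filter.tendsto_atBot_add_const_right _ _ ?_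
    refine Filter.tendsto_id.const_mul_atBot ?_
    exact div_pos
      (sub_pos.2 (lt_of_le_of_ne (hmin j) fun h => hj (hinj h.symm))) hη)
  rw [MeasureTheory.integral_neg, MeasureTheory.integral_of_hasDerivAt_of_tendsto hV hI hB hT]
  have := hk iMax
  have := hk iMin
  field_simp
  ring
end

section
/- Let u : ℝ² → ℝ be a smooth function with u(X,T) ≠ 0 for all (X,T), satisfying ∂_T u + ∂_X((1 + ∂_T u)/u) = 0 everywhere, and let λ be a real number with λ + u(X,T) ≠ 0 for all (X,T). Then the Bäcklund transform u^λ := (∂_X u)/(λ + u) + u satisfies ∂_T u^λ + ∂_X((1 + ∂_T u^λ)/u^λ) = 0 at every point (X,T) where u^λ(X,T) ≠ 0. -/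
theorem backlund_aux (u : ℝ → ℝ → ℝ)
    (hs : ContDiff ℝ (⊤ : ℕ∞) (fun p : ℝ × ℝ => u p.1 p.2)) :
    ∃ a b c : ℝ → ℝ → ℝ,
      (∀ x t, HasDerivAt (fun x => u x t) (a x t) x) ∧
      (∀ x t, HasDerivAt (fun t => u x t) (b x t) t) ∧
      (∀ x t, HasDerivAt (fun t => a x t) (c x t) t) ∧
      (∀ x t, HasDerivAt (fun x => b x t) (c x t) x) := by
  set F : ℝ × ℝ → ℝ := fun p => u p.1 p.2 with hF
  have hX : ∀ x t : ℝ, HasDerivAt (fun x : ℝ => ((x, t) : ℝ × ℝ)) (1, 0) x := fun x t =>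
    (hasDerivAt_id x).prodMk (hasDerivAt_const x t)
  have hT : ∀ x t : ℝ, HasDerivAt (fun t : ℝ => ((x, t) : ℝ × ℝ)) (0, 1) t := fun x t =>
    (hasDerivAt_const t x).prodMk (hasDerivAt_id t)
  have h1 : ∀ p, HasFDerivAt F (fderiv ℝ F p) p := fun p =>
    (hs.differentiable (by simp) p).hasFDerivAt
  have hs' : ContDiff ℝ (⊤ : ℕ∞) (fderiv ℝ F) := (contDiff_infty_iff_fderiv.1 hs).2
  have h2 : ∀ p, HasFDerivAt (fderiv ℝ F) (fderiv ℝ (fderiv ℝ F) p) p := fun p =>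
    (hs'.differentiable (by simp) p).hasFDerivAt
  have hsym : ∀ p v w, fderiv ℝ (fderiv ℝ F) p v w = fderiv ℝ (fderiv ℝ F) p w v := fun p v w =>
    second_derivative_symmetric h1 (h2 p) v w
  refine ⟨fun x t => fderiv ℝ F (x, t) (1, 0), fun x t => fderiv ℝ F (x, t) (0, 1),
    fun x t => fderiv ℝ (fderiv ℝ F) (x, t) (0, 1) (1, 0), ?_, ?_, ?_, ?_⟩
  · intro x t
    exact (h1 (x, t)).comp_hasDerivAt x (hX x t)
  · intro x t
    exact (h1 (x, t)).comp_hasDerivAt t (hT x t)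
  · intro x t
    have h3 : HasDerivAt (fun t => fderiv ℝ F (x, t)) (fderiv ℝ (fderiv ℝ F) (x, t) (0, 1)) t :=
      (h2 (x, t)).comp_hasDerivAt t (hT x t)
    exact (ContinuousLinearMap.apply ℝ ℝ ((1, 0) : ℝ × ℝ)).hasFDerivAt.comp_hasDerivAt t h3
  · intro x t
    have h3 : HasDerivAt (fun x => fderiv ℝ F (x, t)) (fderiv ℝ (fderiv ℝ F) (x, t) (1, 0)) x :=
      (h2 (x, t)).comp_hasDerivAt x (hX x t)
    beta_reduce
    rw [hsym]
    exact (ContinuousLinearMap.apply ℝ ℝ ((0, 1) : ℝ × ℝ)).hasFDerivAt.comp_hasDerivAt x h3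

/-- The one-parameter Bäcklund transform
`u^λ = (∂_X u)/(λ + u) + u` of a smooth nowhere-vanishing solution `u` of
`∂_T u + ∂_X((1 + ∂_T u)/u) = 0` (with `λ + u ≠ 0` everywhere) again satisfies
the same equation wherever `u^λ ≠ 0`. -/
theorem backlund_one_parameter
    (u : ℝ → ℝ → ℝ)
    (hsmooth : ContDiff ℝ (⊤ : ℕ∞) (fun p : ℝ × ℝ => u p.1 p.2))
    (hne : ∀ X T, u X T ≠ 0)
    (hpde : ∀ X T,
      deriv (fun t => u X t) T
        + deriv (fun x => (1 + deriv (fun t => u x t) T) / u x T) X = 0)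
    (lam : ℝ) (hlam : ∀ X T, lam + u X T ≠ 0)
    (uL : ℝ → ℝ → ℝ)
    (huL : ∀ X T, uL X T = deriv (fun x => u x T) X / (lam + u X T) + u X T) :
    ∀ X T, uL X T ≠ 0 →
      deriv (fun t => uL X t) T
        + deriv (fun x => (1 + deriv (fun t => uL x t) T) / uL x T) X = 0 := by
  obtain ⟨a, b, c, ha, hb, hac, hbc⟩ := backlund_aux u hsmooth
  have hc : ∀ x t, c x t = a x t * (1 + b x t) / u x t - u x t * b x t := by
    intro x t
    have h := hpde x t
    have e : (fun x => (1 + deriv (fun t => u x t) t) / u x t)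
        = fun x => (1 + b x t) / u x t := by
      funext y; rw [(hb y t).deriv]
    have hu := hne x t
    rw [e, (hb x t).deriv, (((hbc x t).const_add 1).fun_div (ha x t) hu).deriv] at h
    field_simp at h ⊢
    linarith
  have huL' : ∀ x t, uL x t = a x t / (lam + u x t) + u x t := by
    intro x t
    rw [huL, (ha x t).deriv]
  have hLt : ∀ x t, HasDerivAt (fun t => uL x t)
      ((c x t * (lam + u x t) - a x t * b x t) / (lam + u x t) ^ 2 + b x t) t := by
    intro x t
    simp only [huL']
    exact ((hac x t).fun_div ((hb x t).const_add lam) (hlam x t)).add (hb x t)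
  intro X T hX
  have hcont : ContinuousAt (fun x => uL x T) X := by
    have hux : ∀ x, deriv (fun x => u x T) x = a x T := fun x => (ha x T).deriv
    have hsm : ContDiff ℝ (⊤ : ℕ∞) (fun x => u x T) :=
      hsmooth.comp (contDiff_id.prodMk contDiff_const)
    have hca : Continuous (fun x => a x T) := by
      have := hsm.continuous_deriv (by exact_mod_cast le_top)
      rwa [show deriv (fun x => u x T) = fun x => a x T from funext hux] at this
    have hcu := hsm.continuous
    simp only [huL']
    exact ((hca.div (continuous_const.add hcu) (fun x => hlam x T)).add hcu).continuousAt
  have hev : (fun x => (1 + deriv (fun t => uL x t) T) / uL x T)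
      =ᶠ[nhds X] fun x => (1 + b x T) / u x T - b x T / (lam + u x T) := by
    filter_upwards [hcont.eventually_ne hX] with x hx
    have hu := hne x T
    have hl := hlam x T
    rw [(hLt x T).deriv, div_eq_iff hx, huL', hc]
    field_simp
    ring
  have hu := hne X T
  have hl := hlam X T
  rw [hev.deriv_eq, (hLt X T).deriv,
    ((((hbc X T).const_add 1).fun_div (ha X T) hu).fun_sub
      ((hbc X T).fun_div ((ha X T).const_add lam) hl)).deriv, hc]
  field_simp
  ring
end

section
/- Let u, ρ : ℝ² → ℝ be smooth functions with u(X,T) ≠ 0 for all (X,T), satisfying the system ∂_X u = u(ρ − u) and ∂_T ρ = −∂_X(1/u) everywhere, and let λ be a real number with λ + u(X,T) ≠ 0 and λ + ρ(X,T) ≠ 0 for all (X,T). Then the transformed pair u^λ := (∂_X u)/(λ + u) + u and ρ^λ := (∂_X ρ)/(λ + ρ) + ρ satisfies the same system, that is ∂_X u^λ = u^λ(ρ^λ − u^λ) and ∂_T ρ^λ = −∂_X(1/u^λ), at every point where u^λ ≠ 0. -/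
theorem mixed_aux (f : ℝ × ℝ → ℝ) (hf : ContDiff ℝ (⊤ : ℕ∞) f) (X T : ℝ) :
    ∃ M, HasDerivAt (fun t => deriv (fun x => f (x, t)) X) M T ∧
      HasDerivAt (fun x => deriv (fun t => f (x, t)) T) M X := by
  have hd : Differentiable ℝ f := hf.differentiable (by simp)
  have hf2 : ContDiff ℝ 2 f := contDiff_infty.1 hf 2
  have hf' : ContDiff ℝ 1 (fderiv ℝ f) := hf2.fderiv_right (by norm_num)
  have hd' : Differentiable ℝ (fderiv ℝ f) := hf'.differentiable (by simp)
  have cx : ∀ x t : ℝ, HasDerivAt (fun x : ℝ => (x, t)) ((1 : ℝ), (0 : ℝ)) x := fun x t =>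
    (hasDerivAt_id x).prodMk (hasDerivAt_const x t)
  have ct : ∀ x t : ℝ, HasDerivAt (fun t : ℝ => (x, t)) ((0 : ℝ), (1 : ℝ)) t := fun x t =>
    (hasDerivAt_const t x).prodMk (hasDerivAt_id t)
  have ex : ∀ x t : ℝ, deriv (fun x => f (x, t)) x = fderiv ℝ f (x, t) (1, 0) := fun x t =>
    ((hd (x, t)).hasFDerivAt.comp_hasDerivAt x (cx x t)).deriv
  have et : ∀ x t : ℝ, deriv (fun t => f (x, t)) t = fderiv ℝ f (x, t) (0, 1) := fun x t =>
    ((hd (x, t)).hasFDerivAt.comp_hasDerivAt t (ct x t)).deriv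
  have hsymm : IsSymmSndFDerivAt ℝ f (X, T) :=
    hf2.contDiffAt.isSymmSndFDerivAt (by simp)
  refine ⟨fderiv ℝ (fderiv ℝ f) (X, T) (0, 1) (1, 0), ?_, ?_⟩
  · simp only [ex]
    have h := (hd' (X, T)).hasFDerivAt.comp_hasDerivAt T (ct X T)
    simpa using h.clm_apply (hasDerivAt_const T ((1 : ℝ), (0 : ℝ)))
  · simp only [et]
    have h := (hd' (X, T)).hasFDerivAt.comp_hasDerivAt X (cx X T)
    rw [hsymm.eq]
    simpa using h.clm_apply (hasDerivAt_const X ((0 : ℝ), (1 : ℝ)))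

/-- The componentwise Bäcklund transformation
`u^λ = (∂_X u)/(λ + u) + u`, `ρ^λ = (∂_X ρ)/(λ + ρ) + ρ` maps smooth solutions
of the system `∂_X u = u(ρ - u)`, `∂_T ρ = -∂_X (1/u)` (with `u ≠ 0`,
`λ + u ≠ 0`, `λ + ρ ≠ 0` everywhere) to solutions of the same system, valid
wherever `u^λ ≠ 0`. -/
theorem backlund_system
    (u ρ : ℝ → ℝ → ℝ)
    (hu_smooth : ContDiff ℝ (⊤ : ℕ∞) (fun p : ℝ × ℝ => u p.1 p.2))
    (hρ_smooth : ContDiff ℝ (⊤ : ℕ∞) (fun p : ℝ × ℝ => ρ p.1 p.2))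
    (hne : ∀ X T, u X T ≠ 0)
    (hsys1 : ∀ X T, deriv (fun x => u x T) X = u X T * (ρ X T - u X T))
    (hsys2 : ∀ X T, deriv (fun t => ρ X t) T = -deriv (fun x => 1 / u x T) X)
    (lam : ℝ)
    (hlamu : ∀ X T, lam + u X T ≠ 0) (hlamρ : ∀ X T, lam + ρ X T ≠ 0)
    (uL ρL : ℝ → ℝ → ℝ)
    (huL : ∀ X T, uL X T = deriv (fun x => u x T) X / (lam + u X T) + u X T)
    (hρL : ∀ X T, ρL X T = deriv (fun x => ρ x T) X / (lam + ρ X T) + ρ X T) :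
    ∀ X T, uL X T ≠ 0 →
      deriv (fun x => uL x T) X = uL X T * (ρL X T - uL X T) ∧
      deriv (fun t => ρL X t) T = -deriv (fun x => 1 / uL x T) X := by
  have hdu : ∀ X T, HasDerivAt (fun x => u x T) (u X T * (ρ X T - u X T)) X := by
    intro X T
    rw [← hsys1]
    have h1 : Differentiable ℝ (fun p : ℝ × ℝ => u p.1 p.2) := hu_smooth.differentiable (by simp)
    have h2 : Differentiable ℝ (fun x : ℝ => (x, T)) := by fun_prop
    exact ((h1.comp h2) X).hasDerivAt
  have hdρ : Differentiable ℝ (fun p : ℝ × ℝ => ρ p.1 p.2) := hρ_smooth.differentiable (by simp)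
  have hρx : ∀ X T, HasDerivAt (fun x => ρ x T) (deriv (fun x => ρ x T) X) X := by
    intro X T
    have h2 : Differentiable ℝ (fun x : ℝ => (x, T)) := by fun_prop
    exact ((hdρ.comp h2) X).hasDerivAt
  have hρt' : ∀ X T, deriv (fun t => ρ X t) T = ρ X T / u X T - 1 := by
    intro X T
    have hn := hne X T
    have h := ((hasDerivAt_const X (1 : ℝ)).fun_div (hdu X T) hn).deriv
    rw [hsys2, h]
    field_simp
    ring
  have hρt : ∀ X T, HasDerivAt (fun t => ρ X t) (ρ X T / u X T - 1) T := by
    intro X T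
    rw [← hρt']
    have h2 : Differentiable ℝ (fun t : ℝ => (X, t)) := by fun_prop
    exact ((hdρ.comp h2) T).hasDerivAt
  have huL' : ∀ X T, uL X T = u X T * (lam + ρ X T) / (lam + u X T) := by
    intro X T
    have := hlamu X T
    rw [huL, hsys1]
    field_simp
    ring
  intro X T _
  have n1 := hne X T
  have n2 := hlamu X T
  have n3 := hlamρ X T
  constructor
  · have h := (((hdu X T).fun_mul ((hρx X T).const_add lam)).fun_div
      ((hdu X T).const_add lam) n2).deriv
    simp only [huL'] at *
    rw [h, hρL]
    field_simp
    ring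
  · obtain ⟨M, hM1, hM2⟩ := mixed_aux (fun p : ℝ × ℝ => ρ p.1 p.2) hρ_smooth X T
    simp only [hρt'] at hM2
    have hM := hM2.unique (((hρx X T).fun_div (hdu X T) n1).sub_const 1)
    have e1 := ((hM1.fun_div ((hρt X T).const_add lam) n3).fun_add (hρt X T)).deriv
    have e2 := (((hdu X T).const_add lam).fun_div
      ((hdu X T).fun_mul ((hρx X T).const_add lam)) (mul_ne_zero n1 n3)).deriv
    simp only [hρL, huL', one_div_div]
    rw [e1, e2, hM]
    field_simp
    ring
end

section
/- Let φ : ℝ² → ℝ be a smooth function of (X,T) satisfying ∂_X ∂_T φ + φ = 0 everywhere, and let λ_1, λ_2 be real numbers. Define ψ = ∂_{XX} φ + (λ_1 + λ_2) ∂_X φ + λ_1 λ_2 φ, so that the two-parameter Bäcklund transform is u^{λ_1,λ_2} = (∂_{XXX} φ + (λ_1+λ_2) ∂_{XX} φ + λ_1 λ_2 ∂_X φ)/(∂_{XX} φ + (λ_1+λ_2) ∂_X φ + λ_1 λ_2 φ) = (∂_X ψ)/ψ. Then u^{λ_1,λ_2} is symmetric under interchange of λ_1 and λ_2, and at every point (X,T)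 where ψ(X,T) ≠ 0 and ∂_X ψ(X,T) ≠ 0 it satisfies ∂_T u^{λ_1,λ_2} + ∂_X((1 + ∂_T u^{λ_1,λ_2})/u^{λ_1,λ_2}) = 0. -/
def BTSm (f : ℝ → ℝ → ℝ) : Prop := ContDiff ℝ (⊤ : ℕ∞) (fun p : ℝ × ℝ => f p.1 p.2)

noncomputable def btDx (f : ℝ → ℝ → ℝ) (X T : ℝ) : ℝ := deriv (fun x => f x T) X
noncomputable def btDt (f : ℝ → ℝ → ℝ) (X T : ℝ) : ℝ := deriv (fun t => f X t) T

lemma BTSm.fd {f : ℝ → ℝ → ℝ} (h : BTSm f) (p : ℝ × ℝ) :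
    HasFDerivAt (fun p : ℝ × ℝ => f p.1 p.2) (fderiv ℝ (fun p : ℝ × ℝ => f p.1 p.2) p) p :=
  (h.differentiable (by simp) p).hasFDerivAt

lemma BTSm.hx0 {f : ℝ → ℝ → ℝ} (h : BTSm f) (X T : ℝ) :
    HasDerivAt (fun x => f x T) (fderiv ℝ (fun p : ℝ × ℝ => f p.1 p.2) (X, T) (1, 0)) X :=
  HasFDerivAt.comp_hasDerivAt (f := fun x : ℝ => (x, T)) X (h.fd (X, T)) ((hasDerivAt_id X).prodMk (hasDerivAt_const X T))

lemma BTSm.ht0 {f : ℝ → ℝ → ℝ} (h : BTSm f) (X T : ℝ) :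
    HasDerivAt (fun t => f X t) (fderiv ℝ (fun p : ℝ × ℝ => f p.1 p.2) (X, T) (0, 1)) T :=
  (h.fd (X, T)).comp_hasDerivAt T ((hasDerivAt_const T X).prodMk (hasDerivAt_id T))

lemma BTSm.hx {f : ℝ → ℝ → ℝ} (h : BTSm f) (X T : ℝ) :
    HasDerivAt (fun x => f x T) (btDx f X T) X := (h.hx0 X T).differentiableAt.hasDerivAt

lemma BTSm.ht {f : ℝ → ℝ → ℝ} (h : BTSm f) (X T : ℝ) :
    HasDerivAt (fun t => f X t) (btDt f X T) T := (h.ht0 X T).differentiableAt.hasDerivAt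

lemma BTSm.fdsm {f : ℝ → ℝ → ℝ} (h : BTSm f) :
    ContDiff ℝ (⊤ : ℕ∞) (fderiv ℝ (fun p : ℝ × ℝ => f p.1 p.2)) :=
  ContDiff.fderiv_right h (by simp)

lemma BTSm.dx_eq {f : ℝ → ℝ → ℝ} (h : BTSm f) :
    btDx f = fun X T => fderiv ℝ (fun p : ℝ × ℝ => f p.1 p.2) (X, T) (1, 0) := by
  funext X T; exact (h.hx0 X T).deriv

lemma BTSm.dt_eq {f : ℝ → ℝ → ℝ} (h : BTSm f) :
    btDt f = fun X T => fderiv ℝ (fun p : ℝ × ℝ => f p.1 p.2) (X, T) (0, 1) := by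
  funext X T; exact (h.ht0 X T).deriv

lemma BTSm.dx {f : ℝ → ℝ → ℝ} (h : BTSm f) : BTSm (btDx f) := by
  rw [h.dx_eq]
  exact h.fdsm.clm_apply contDiff_const

lemma BTSm.dt {f : ℝ → ℝ → ℝ} (h : BTSm f) : BTSm (btDt f) := by
  rw [h.dt_eq]
  exact h.fdsm.clm_apply contDiff_const

lemma BTSm.comm {f : ℝ → ℝ → ℝ} (h : BTSm f) : btDx (btDt f) = btDt (btDx f) := by
  funext X T
  have h2 : HasFDerivAt (fderiv ℝ (fun p : ℝ × ℝ => f p.1 p.2))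
      (fderiv ℝ (fderiv ℝ (fun p : ℝ × ℝ => f p.1 p.2)) (X, T)) (X, T) :=
    (h.fdsm.differentiable (by simp) _).hasFDerivAt
  have hs := second_derivative_symmetric (fun y => h.fd y) h2 (1, 0) (0, 1)
  have e1 : HasDerivAt (fun x => fderiv ℝ (fun p : ℝ × ℝ => f p.1 p.2) (x, T)) _ X :=
    h2.comp_hasDerivAt X ((hasDerivAt_id X).prodMk (hasDerivAt_const X T))
  have e2 : HasDerivAt (fun t => fderiv ℝ (fun p : ℝ × ℝ => f p.1 p.2) (X, t)) _ T :=
    h2.comp_hasDerivAt T ((hasDerivAt_const T X).prodMk (hasDerivAt_id T))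
  have e3 := (e1.clm_apply (hasDerivAt_const X ((0 : ℝ), (1 : ℝ)))).deriv
  have e4 := (e2.clm_apply (hasDerivAt_const T ((1 : ℝ), (0 : ℝ)))).deriv
  rw [h.dt_eq, h.dx_eq]
  simp only [btDx, btDt]
  rw [e3, e4]
  simpa using hs

def BTLin (f : ℝ → ℝ → ℝ) : Prop := ∀ X T, btDx (btDt f) X T = - f X T

lemma BTLin.dx {f : ℝ → ℝ → ℝ} (h : BTSm f) (hl : BTLin f) : BTLin (btDx f) := by
  intro X T
  rw [← h.comm]
  have : btDx (btDt f) = fun X T => - f X T := by funext X T; exact hl X T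
  rw [this]
  exact (h.hx X T).neg.deriv

lemma BTLin.comb {f g k : ℝ → ℝ → ℝ} (hf : BTSm f) (hg : BTSm g) (hk : BTSm k)
    (lf : BTLin f) (lg : BTLin g) (lk : BTLin k) (a b : ℝ) :
    BTLin (fun X T => f X T + a * g X T + b * k X T) := by
  intro X T
  have : btDt (fun X T => f X T + a * g X T + b * k X T)
      = fun X T => btDt f X T + a * btDt g X T + b * btDt k X T := by
    funext X T
    exact (((hf.ht X T).add ((hg.ht X T).const_mul a)).add ((hk.ht X T).const_mul b)).deriv
  rw [this]
  have e := (((hf.dt.hx X T).add ((hg.dt.hx X T).const_mul a)).add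
    ((hk.dt.hx X T).const_mul b)).deriv
  refine e.trans ?_
  rw [lf, lg, lk]; ring

lemma bt_main {f : ℝ → ℝ → ℝ} (h : BTSm f) (hl : BTLin f) (X T : ℝ) (h0 : f X T ≠ 0)
    (h1 : btDx f X T ≠ 0) :
    deriv (fun t => btDx f X t / f X t) T
      + deriv (fun x => (1 + deriv (fun t => btDx f x t / f x t) T) / (btDx f x T / f x T)) X
      = 0 := by
  have A : ∀ x, f x T ≠ 0 → deriv (fun t => btDx f x t / f x t) T
      = -1 - btDx f x T * btDt f x T / f x T ^ 2 := by
    intro x hx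
    have := ((h.dx.ht x T).div (h.ht x T) hx).deriv
    refine this.trans ?_
    rw [← h.comm, hl]
    field_simp
  have B : (fun x => (1 + deriv (fun t => btDx f x t / f x t) T) / (btDx f x T / f x T))
      =ᶠ[nhds X] fun x => - (btDt f x T / f x T) := by
    filter_upwards [(h.hx X T).continuousAt.eventually_ne h0,
      (h.dx.hx X T).continuousAt.eventually_ne h1] with x hx hx1
    rw [A x hx]
    field_simp
    ring
  rw [B.deriv_eq, A X h0]
  have C := ((h.dt.hx X T).div (h.hx X T) h0).neg.deriv
  rw [show deriv (fun x => - (btDt f x T / f x T)) X = _ from C, hl]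
  field_simp
  ring

/-- The auxiliary function `ψ = ∂_{XX} φ + (λ₁ + λ₂) ∂_X φ + λ₁ λ₂ φ`. -/
noncomputable def psiBT (φ : ℝ → ℝ → ℝ) (l₁ l₂ : ℝ) (X T : ℝ) : ℝ :=
  deriv (fun x => deriv (fun x' => φ x' T) x) X
    + (l₁ + l₂) * deriv (fun x => φ x T) X + l₁ * l₂ * φ X T

/-- The two-parameter Bäcklund transform `u^{λ₁,λ₂} = (∂_X ψ)/ψ`. -/
noncomputable def btTwo (φ : ℝ → ℝ → ℝ) (l₁ l₂ : ℝ) (X T : ℝ) : ℝ :=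
  deriv (fun x => psiBT φ l₁ l₂ x T) X / psiBT φ l₁ l₂ X T

/-- If `φ` is smooth and satisfies `∂_X ∂_T φ + φ = 0`, then the
two-parameter Bäcklund transform `u^{λ₁,λ₂} = (∂_X ψ)/ψ`, with
`ψ = ∂_{XX} φ + (λ₁+λ₂) ∂_X φ + λ₁ λ₂ φ`, is symmetric in `(λ₁, λ₂)` and
satisfies `∂_T u + ∂_X((1 + ∂_T u)/u) = 0` wherever `ψ ≠ 0` and `∂_X ψ ≠ 0`. -/
theorem backlund_two_parameter
    (φ : ℝ → ℝ → ℝ)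
    (hφ : ContDiff ℝ (⊤ : ℕ∞) (fun p : ℝ × ℝ => φ p.1 p.2))
    (hlin : ∀ X T, deriv (fun x => deriv (fun t => φ x t) T) X + φ X T = 0)
    (l₁ l₂ : ℝ) :
    btTwo φ l₁ l₂ = btTwo φ l₂ l₁ ∧
    (∀ X T, psiBT φ l₁ l₂ X T ≠ 0 →
      deriv (fun x => psiBT φ l₁ l₂ x T) X ≠ 0 →
      deriv (fun t => btTwo φ l₁ l₂ X t) T
        + deriv (fun x =>
            (1 + deriv (fun t => btTwo φ l₁ l₂ x t) T) / btTwo φ l₁ l₂ x T) X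
        = 0) := by
  have h : BTSm φ := hφ
  have hl : BTLin φ := fun X T => eq_neg_of_add_eq_zero_left (hlin X T)
  refine ⟨?_, ?_⟩
  · have : psiBT φ l₁ l₂ = psiBT φ l₂ l₁ := by
      funext X T; simp only [psiBT]; ring
    funext X T
    simp only [btTwo, this]
  · intro X T h0 h1
    have hs : BTSm (psiBT φ l₁ l₂) :=
      (ContDiff.add (ContDiff.add h.dx.dx (contDiff_const.mul h.dx)) (contDiff_const.mul h))
    have hL : BTLin (psiBT φ l₁ l₂) :=
      BTLin.comb h.dx.dx h.dx h (BTLin.dx h.dx (BTLin.dx h hl)) (BTLin.dx h hl) hl _ _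
    exact bt_main hs hL X T h0 h1
end

section
/- Let N ≥ 2, let k_1, …, k_N be pairwise distinct nonzero real numbers and δ_1, …, δ_N real, with θ_m(X,T) = k_m X − T/k_m + δ_m, and for η > 0 let u(X,T;η) = (Σ_{m=1}^N k_m e^{θ_m(X,T)/η}) / (Σ_{m=1}^N e^{θ_m(X,T)/η}). Fix distinct indices i, j and a point (X,T) such that max(θ_i(X,T), θ_j(X,T)) > θ_l(X,T) for every l ∉ {i,j}. Then the difference u(X,T;η) − (k_i e^{θ_i(X,T)/η} + k_j e^{θ_j(X,T)/η})/(e^{θ_i(X,T)/η} + e^{θ_j(X,T)/η}) tends to 0 as η → 0⁺; equivalently, on the region R_{ij} = R_i ∪ R_j ∪ L_{ij} the multi-kink solution is asymptotically the single kink (k_i + k_j)/2 + ((k_i − k_j)/2) tanh((θ_i − θ_j)/(2η)). -/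
/-- On the region `R_{ij}` where `max(θᵢ, θⱼ)` strictly dominates
every other phase, the multi-kink function is asymptotic, as `η → 0⁺`, to the
single two-term kink `(kᵢ e^{θᵢ/η} + kⱼ e^{θⱼ/η})/(e^{θᵢ/η} + e^{θⱼ/η})`, i.e.
their difference tends to `0`. -/
theorem multikink_two_term_reduction
    (N : ℕ) (hN : 2 ≤ N) (k δ : Fin N → ℝ)
    (hk : ∀ m, k m ≠ 0) (hinj : Function.Injective k)
    (θ : Fin N → ℝ → ℝ → ℝ)
    (hθ : ∀ m X T, θ m X T = k m * X - T / k m + δ m)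
    (i j : Fin N) (hij : i ≠ j) (X T : ℝ)
    (hdom : ∀ l, l ≠ i → l ≠ j → max (θ i X T) (θ j X T) > θ l X T) :
    Filter.Tendsto
      (fun η : ℝ =>
        (∑ m, k m * Real.exp (θ m X T / η)) / (∑ m, Real.exp (θ m X T / η))
          - (k i * Real.exp (θ i X T / η) + k j * Real.exp (θ j X T / η))
            / (Real.exp (θ i X T / η) + Real.exp (θ j X T / η)))
      (nhdsWithin 0 (Set.Ioi 0)) (nhds 0) := by
  generalize hM : max (θ i X T) (θ j X T) = M at hdom
  have hji : j ∈ Finset.univ.erase i := Finset.mem_erase.2 ⟨hij.symm, Finset.mem_univ _⟩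
  apply squeeze_zero_norm' (a := fun η : ℝ => ∑ l ∈ (Finset.univ.erase i).erase j,
    (|k l| + (|k i| + |k j|)) * Real.exp ((θ l X T - M) * η⁻¹))
  · filter_upwards [self_mem_nhdsWithin] with η hη
    have hη' : 0 < η := hη
    have hM' : Real.exp (M / η) ≤ ∑ m, Real.exp (θ m X T / η) := by
      rcases max_choice (θ i X T) (θ j X T) with h | h
      · rw [← hM, h]
        exact Finset.single_le_sum (f := fun m => Real.exp (θ m X T / η))
          (fun m _ => (Real.exp_pos _).le) (Finset.mem_univ i)
      · rw [← hM, h]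
        exact Finset.single_le_sum (f := fun m => Real.exp (θ m X T / η))
          (fun m _ => (Real.exp_pos _).le) (Finset.mem_univ j)
    have hS : 0 < ∑ m, Real.exp (θ m X T / η) := (Real.exp_pos _).trans_le hM'
    have hi := Real.exp_pos (θ i X T / η)
    have hj := Real.exp_pos (θ j X T / η)
    generalize hv : (k i * Real.exp (θ i X T / η) + k j * Real.exp (θ j X T / η))
            / (Real.exp (θ i X T / η) + Real.exp (θ j X T / η)) = v
    have hvB : k i * Real.exp (θ i X T / η) + k j * Real.exp (θ j X T / η)
        = v * (Real.exp (θ i X T / η) + Real.exp (θ j X T / η)) := by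
      rw [← hv]; field_simp
    have hvabs : |v| ≤ |k i| + |k j| := by
      rw [← hv, abs_div, abs_of_pos (add_pos hi hj), div_le_iff₀ (add_pos hi hj)]
      refine (abs_add_le _ _).trans ?_
      rw [abs_mul, abs_mul, abs_of_pos hi, abs_of_pos hj]
      nlinarith [mul_nonneg (abs_nonneg (k i)) hj.le, mul_nonneg (abs_nonneg (k j)) hi.le]
    have hsum : (∑ m, k m * Real.exp (θ m X T / η)) / (∑ m, Real.exp (θ m X T / η)) - v
        = ∑ l ∈ (Finset.univ.erase i).erase j,
          (k l - v) * (Real.exp (θ l X T / η) / (∑ m, Real.exp (θ m X T / η))) := by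
      have h1 : ∑ m, (k m - v) * Real.exp (θ m X T / η)
          = ∑ l ∈ (Finset.univ.erase i).erase j, (k l - v) * Real.exp (θ l X T / η) := by
        rw [← Finset.add_sum_erase _ _ (Finset.mem_univ i), ← Finset.add_sum_erase _ _ hji]
        linarith
      have h2 : ∑ m, (k m - v) * Real.exp (θ m X T / η)
          = ∑ m, k m * Real.exp (θ m X T / η) - v * ∑ m, Real.exp (θ m X T / η) := by
        rw [Finset.mul_sum, ← Finset.sum_sub_distrib]
        exact Finset.sum_congr rfl fun m _ => by ring
      simp_rw [← mul_div_assoc]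
      rw [← Finset.sum_div, ← h1, h2, sub_div, mul_div_assoc, div_self hS.ne', mul_one]
    rw [hsum]
    refine (norm_sum_le _ _).trans (Finset.sum_le_sum fun l _ => ?_)
    rw [norm_mul, Real.norm_eq_abs, Real.norm_eq_abs, abs_of_pos (div_pos (Real.exp_pos _) hS)]
    refine mul_le_mul ((abs_sub _ _).trans (by linarith)) ?_
      (div_pos (Real.exp_pos _) hS).le (by positivity)
    rw [sub_mul, Real.exp_sub, ← div_eq_mul_inv, ← div_eq_mul_inv]
    exact div_le_div_of_nonneg_left (Real.exp_pos _).le (Real.exp_pos _) hM'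
  · rw [← Finset.sum_const_zero (s := (Finset.univ.erase i).erase j)]
    refine tendsto_finsetSum _ fun l hl => ?_
    simp only [Finset.mem_erase, Finset.mem_univ, and_true] at hl
    have h3 : Filter.Tendsto (fun η : ℝ => (θ l X T - M) * η⁻¹)
        (nhdsWithin 0 (Set.Ioi 0)) Filter.atBot :=
      tendsto_inv_nhdsGT_zero.const_mul_atTop_of_neg (by linarith [hdom l hl.2 hl.1])
    have h4 := (Real.tendsto_exp_atBot.comp h3).const_mul (|k l| + (|k i| + |k j|))
    rw [mul_zero] at h4
    simpa using h4
end
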